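/- Assume the finite-state Euler–Maruyama setting with additive noise (σ(x,i) = σ(i)), the global Lipschitz condition with constant L, condition (H) with parameters c_0 and (β_i), and the averaging condition Σ_i μ_i β_i < 0. Fix p ∈ (0,1) with η_p > 0, fix a strictly positive eigenvector ξ^{(p)} of Q_p with eigenvalue −η_p, and define α as in Theorem 3.1 (α := p·[β_0 + 4L²(3+4β_0) + 4^{(2+p)/2} β_0 (4^{p/2} L^p + q_0 ξ̂_0 ξ̄_0)], with ξ̂_0 = max_i ξ^{(p)}_i, ξ̄_0 = (min_i ξ^{(p)}_i)^{−1}, β_0 = max_i|β_i|, q_0 = max_i(−q_ii)). Then for every δ ∈ (0,1) with δ < (1/(16L²)) ∧ (η_p/α)^{2/p} and every initial point (x,i) ∈ ℝⁿ × S, the p-th moments of the k-step distributions are uniformly bounded: sup_{k ≥ 0} ∫_{ℝⁿ×S} |y|^p d(K_δ^{(k)} δ_{(x,i)})(y,j) < ∞, where K_δ^{(k)} δ_{(x,i)} denotes the distribution after k steps of the kernel K_δ started from the Dirac mass at (x,i). -/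

import Mathlib

open MeasureTheory ProbabilityTheory

/-- `Q` has nonnegative off-diagonal entries and every row sums to zero
(a conservative Q-matrix). -/
def IsConservativeQMatrix {N : ℕ} (Q : Matrix (Fin N) (Fin N) ℝ) : Prop :=
  (∀ i j, i ≠ j → 0 ≤ Q i j) ∧ ∀ i, ∑ j, Q i j = 0

/-- Irreducibility: any two distinct states are connected by a finite chain of
transitions with strictly positive rates. -/
def MatrixIrreducible {N : ℕ} (Q : Matrix (Fin N) (Fin N) ℝ) : Prop :=
  ∀ i j : Fin N, i ≠ j → ∃ (k : ℕ) (c : ℕ → Fin N),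
    c 0 = i ∧ c k = j ∧ ∀ l < k, 0 < Q (c l) (c (l + 1))

/-- The set of real parts of the (complex) eigenvalues of a real matrix. -/
def spectrumRe {N : ℕ} (M : Matrix (Fin N) (Fin N) ℝ) : Set ℝ :=
  {x : ℝ | ∃ γ ∈ spectrum ℂ (M.map Complex.ofReal), γ.re = x}

/-- The matrix exponential `exp M = ∑ₖ Mᵏ/k!`. -/
noncomputable def matExp {N : ℕ} (M : Matrix (Fin N) (Fin N) ℝ) :
    Matrix (Fin N) (Fin N) ℝ :=
  ∑' k : ℕ, ((k.factorial : ℝ)⁻¹) • M ^ k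

/-- Standard Gaussian measure on `ℝ^m`. -/
noncomputable def stdGaussianPi (m : ℕ) : Measure (Fin m → ℝ) :=
  Measure.pi fun _ => gaussianReal 0 1

/-- The distribution on `Fin N` with weights given by row `i` of `P`. -/
noncomputable def rowMeasure {N : ℕ} (P : Matrix (Fin N) (Fin N) ℝ) (i : Fin N) :
    Measure (Fin N) :=
  ∑ j : Fin N, ENNReal.ofReal (P i j) • Measure.dirac j

/-- Hilbert–Schmidt norm of a real matrix. -/
noncomputable def hsNorm {n m : ℕ} (M : Matrix (Fin n) (Fin m) ℝ) : ℝ :=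
  Real.sqrt (∑ i, ∑ j, (M i j) ^ 2)

/-- One step of the Euler–Maruyama scheme as a transition kernel on `ℝⁿ × S`:
starting from `(x, i)`, the next state is
`(x + δ b(x,i) + √δ σ(x,i) Z, J)` with `Z` standard Gaussian on `ℝ^m` and
`J` distributed according to row `i` of `exp(δ Q)`, independently. -/
noncomputable def EMKernel {n m N : ℕ} (Q : Matrix (Fin N) (Fin N) ℝ)
    (b : EuclideanSpace ℝ (Fin n) → Fin N → EuclideanSpace ℝ (Fin n))
    (σ : EuclideanSpace ℝ (Fin n) → Fin N → Matrix (Fin n) (Fin m) ℝ)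
    (δ : ℝ) (q : EuclideanSpace ℝ (Fin n) × Fin N) :
    Measure (EuclideanSpace ℝ (Fin n) × Fin N) :=
  Measure.map
    (fun zj : (Fin m → ℝ) × Fin N =>
      (q.1 + δ • b q.1 q.2 +
        Real.sqrt δ • ((WithLp.equiv 2 (Fin n → ℝ)).symm ((σ q.1 q.2).mulVec zj.1)),
        zj.2))
    ((stdGaussianPi m).prod (rowMeasure (matExp (δ • Q)) q.2))

/-- `π` is an invariant measure of the kernel `K`. -/
def IsInvariantMeasure {α : Type*} [MeasurableSpace α] (K : α → Measure α)
    (π : Measure α) : Prop :=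
  ∀ A : Set α, MeasurableSet A → ∫⁻ q, K q A ∂π = π A

/-!
The Lyapunov function is `V (x, i) = ξᵢ |x| ^ p`. Given the current state, the new position and
the new regime are independent, so one step maps `V` to the product of `E |x'| ^ p` and
`(exp (δ Q) ξ)ᵢ`. By Jensen, `E |x'| ^ p ≤ (E |x'| ^ 2) ^ (p / 2)`, and dissipativity makes this
grow at most by the factor `exp (δ p βᵢ / 2 + O(δ²))`, up to an additive constant. The eigenvector
equation says `Q ξ = -(η + p β / 2) ξ`, so that the second factor is at most
`exp (-δ (η + p βᵢ / 2) + O(δ²)) ξᵢ`. The rates `p βᵢ / 2` cancel: one step multiplies `V` by at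
most `exp (-δ η + O(δ²)) < 1` and adds a constant, and this affine recursion keeps its integral
bounded.
-/

section PiNorm

variable {ι : Type*} [Fintype ι]

lemma apply_le_pi_norm (v : ι → ℝ) (i : ι) : v i ≤ ‖v‖ :=
  (Real.le_norm_self _).trans (norm_le_pi_norm v i)

lemma pi_norm_eq_of_isGreatest_range {v : ι → ℝ} (hv : ∀ i, 0 ≤ v i)
    {c : ℝ} (hc : IsGreatest (Set.range v) c) : ‖v‖ = c := by
  obtain ⟨⟨i, rfl⟩, hle⟩ := hc
  refine le_antisymm ((pi_norm_le_iff_of_nonneg (hv i)).2 fun j ↦ ?_)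
    (apply_le_pi_norm v i)
  rw [Real.norm_of_nonneg (hv j)]
  exact hle ⟨j, rfl⟩

end PiNorm

section MatrixExponential

open NormedSpace
open scoped Matrix Matrix.Norms.Operator

variable {ι : Type*} [Fintype ι] [DecidableEq ι]

lemma exp_apply_nonneg_of_nonneg {M : Matrix ι ι ℝ} (hM : ∀ i j, 0 ≤ M i j) (i j : ι) :
    0 ≤ exp M i j := by
  have hpow (k : ℕ) : ∀ i j, 0 ≤ (M ^ k) i j := by
    induction k with
    | zero => exact fun i j ↦ by rw [pow_zero, Matrix.one_apply]; positivity
    | succ k ih =>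
      intro i j
      rw [pow_succ, Matrix.mul_apply]
      exact Finset.sum_nonneg fun l _ ↦ mul_nonneg (ih i l) (hM l j)
  have hsum : HasSum (fun k : ℕ ↦ ((k.factorial : ℝ)⁻¹ • M ^ k) i j) (exp M i j) :=
    Pi.hasSum.1 (Pi.hasSum.1 (exp_series_hasSum_exp' (𝕂 := ℝ) M) i) j
  exact hsum.nonneg fun k ↦ mul_nonneg (by positivity) (hpow k i j)

lemma exp_add_smul_one (M : Matrix ι ι ℝ) (c : ℝ) :
    exp (M + c • (1 : Matrix ι ι ℝ)) = Real.exp c • exp M := by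
  have hexp : exp (c • (1 : Matrix ι ι ℝ)) = Real.exp c • (1 : Matrix ι ι ℝ) := by
    rw [← Algebra.algebraMap_eq_smul_one, ← Algebra.algebraMap_eq_smul_one, Real.exp_eq_exp_ℝ]
    exact (algebraMap_exp_comm c).symm
  rw [Matrix.exp_add_of_commute _ _ ((Commute.one_right M).smul_right c), hexp, mul_smul_comm,
    mul_one]

lemma exp_apply_nonneg_of_offDiag_nonneg {M : Matrix ι ι ℝ} (hM : ∀ i j, i ≠ j → 0 ≤ M i j)
    (i j : ι) : 0 ≤ exp M i j := by
  set c : ℝ := ∑ k, |M k k|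
  have hshift : ∀ k l, 0 ≤ (M + c • (1 : Matrix ι ι ℝ)) k l := by
    intro k l
    rcases eq_or_ne k l with rfl | hkl
    · have hk : |M k k| ≤ c :=
        Finset.single_le_sum (f := fun k ↦ |M k k|) (fun _ _ ↦ abs_nonneg _) (Finset.mem_univ k)
      simpa using neg_le_iff_add_nonneg.1 (neg_le.1 ((neg_le_abs _).trans hk))
    · simpa [Matrix.one_apply_ne hkl] using hM k l hkl
  have hpos := exp_apply_nonneg_of_nonneg hshift i j
  rw [exp_add_smul_one, Matrix.smul_apply] at hpos
  exact nonneg_of_mul_nonneg_right hpos (Real.exp_pos c)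

lemma hasDerivAt_exp_smul_mulVec (M : Matrix ι ι ℝ) (v : ι → ℝ) (t : ℝ) :
    HasDerivAt (fun u : ℝ ↦ exp (u • M) *ᵥ v) (exp (t • M) *ᵥ (M *ᵥ v)) t := by
  rw [Matrix.mulVec_mulVec]
  exact ((Matrix.mulVecBilin ℝ ℝ).flip v).toContinuousLinearMap.hasFDerivAt.comp_hasDerivAt t
    (hasDerivAt_exp_smul_const M t)

lemma exp_mulVec_eq_self_of_mulVec_eq_zero {M : Matrix ι ι ℝ} {v : ι → ℝ} (h : M *ᵥ v = 0) :
    exp M *ᵥ v = v := by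
  have hderiv (t : ℝ) : HasDerivAt (fun u : ℝ ↦ exp (u • M) *ᵥ v) 0 t := by
    simpa only [h, Matrix.mulVec_zero] using hasDerivAt_exp_smul_mulVec M v t
  simpa using is_const_of_deriv_eq_zero (fun t ↦ (hderiv t).differentiableAt)
    (fun t ↦ (hderiv t).deriv) 1 0

lemma norm_mulVec_le_of_mem_rowStochastic {P : Matrix ι ι ℝ} (hP : P ∈ Matrix.rowStochastic ℝ ι)
    (v : ι → ℝ) : ‖P *ᵥ v‖ ≤ ‖v‖ := by
  refine (pi_norm_le_iff_of_nonneg (norm_nonneg v)).2 fun i ↦ ?_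
  calc ‖∑ j, P i j * v j‖ ≤ ∑ j, P i j * ‖v‖ := by
        refine norm_sum_le_of_le _ fun j _ ↦ ?_
        rw [norm_mul, Real.norm_of_nonneg (Matrix.nonneg_of_mem_rowStochastic hP)]
        exact mul_le_mul_of_nonneg_left (norm_le_pi_norm v j)
          (Matrix.nonneg_of_mem_rowStochastic hP)
    _ = ‖v‖ := by rw [← Finset.sum_mul, Matrix.sum_row_of_mem_rowStochastic hP, one_mul]

section Contraction

variable {M : Matrix ι ι ℝ} (hM : ∀ t : ℝ, 0 ≤ t → ∀ v : ι → ℝ, ‖exp (t • M) *ᵥ v‖ ≤ ‖v‖)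
include hM

lemma norm_exp_smul_mulVec_sub_le {t : ℝ} (ht : 0 ≤ t) (v : ι → ℝ) :
    ‖exp (t • M) *ᵥ v - v‖ ≤ t * ‖M *ᵥ v‖ := by
  have h := norm_image_sub_le_of_norm_deriv_le_segment'
    (fun s _ ↦ (hasDerivAt_exp_smul_mulVec M v s).hasDerivWithinAt)
    (fun s hs ↦ hM s hs.1 (M *ᵥ v)) t (Set.right_mem_Icc.2 ht)
  simpa [mul_comm] using h

lemma norm_exp_smul_mulVec_sub_sub_le {t : ℝ} (ht : 0 ≤ t) (v : ι → ℝ) :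
    ‖exp (t • M) *ᵥ v - v - t • (M *ᵥ v)‖ ≤ t ^ 2 / 2 * ‖M *ᵥ (M *ᵥ v)‖ := by
  have hderiv (s : ℝ) : HasDerivAt (fun u : ℝ ↦ exp (u • M) *ᵥ v - v - u • (M *ᵥ v))
      (exp (s • M) *ᵥ (M *ᵥ v) - M *ᵥ v) s := by
    simpa only [one_smul] using ((hasDerivAt_exp_smul_mulVec M v s).sub_const v).fun_sub
      ((hasDerivAt_id' s).smul_const (M *ᵥ v))
  have hbound (s : ℝ) : HasDerivAt (fun u : ℝ ↦ u ^ 2 / 2 * ‖M *ᵥ (M *ᵥ v)‖)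
      (s * ‖M *ᵥ (M *ᵥ v)‖) s := by
    simpa using ((hasDerivAt_pow 2 s).div_const 2).mul_const ‖M *ᵥ (M *ᵥ v)‖
  exact image_norm_le_of_norm_deriv_right_le_deriv_boundary
    (fun s _ ↦ (hderiv s).continuousAt.continuousWithinAt)
    (fun s _ ↦ (hderiv s).hasDerivWithinAt) (by simp) hbound
    (fun s hs ↦ norm_exp_smul_mulVec_sub_le hM hs.1 (M *ᵥ v)) (Set.right_mem_Icc.2 ht)

end Contraction

end MatrixExponential

section ConservativeQMatrix

open NormedSpace
open scoped Matrix

lemma matExp_eq_exp {N : ℕ} (M : Matrix (Fin N) (Fin N) ℝ) : matExp M = exp M := by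
  rw [matExp, exp_eq_tsum ℝ]

variable {N : ℕ} {Q : Matrix (Fin N) (Fin N) ℝ}

lemma mulVec_apply_of_add_diagonal_mulVec_eq_smul {d v : Fin N → ℝ} {γ : ℝ}
    (h : (Q + Matrix.diagonal d) *ᵥ v = γ • v) (i : Fin N) :
    (Q *ᵥ v) i = (γ - d i) * v i := by
  have hi := congrFun h i
  rw [Matrix.add_mulVec, Pi.add_apply, Matrix.mulVec_diagonal, Pi.smul_apply, smul_eq_mul] at hi
  linarith

namespace IsConservativeQMatrix

variable (hQ : IsConservativeQMatrix Q)
include hQ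

lemma mulVec_one : Q *ᵥ 1 = 0 := by
  ext i
  simpa [Matrix.mulVec, dotProduct] using hQ.2 i

lemma mulVec_apply_eq_sum_mul_sub (v : Fin N → ℝ) (i : Fin N) :
    (Q *ᵥ v) i = ∑ j, Q i j * (v j - v i) := by
  simp only [mul_sub, Finset.sum_sub_distrib, ← Finset.sum_mul, hQ.2 i, zero_mul, sub_zero]
  rfl

lemma sum_erase_eq_neg_diag (i : Fin N) : ∑ j ∈ Finset.univ.erase i, Q i j = -Q i i := by
  rw [Finset.sum_erase_eq_sub (Finset.mem_univ i), hQ.2 i, zero_sub]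

lemma neg_diag_nonneg (i : Fin N) : 0 ≤ -Q i i := by
  rw [← hQ.sum_erase_eq_neg_diag]
  exact Finset.sum_nonneg fun j hj ↦ hQ.1 i j (Finset.ne_of_mem_erase hj).symm

lemma mulVec_apply_nonneg_of_forall_le {v : Fin N → ℝ} {i : Fin N} (hi : ∀ j, v i ≤ v j) :
    0 ≤ (Q *ᵥ v) i := by
  rw [hQ.mulVec_apply_eq_sum_mul_sub]
  refine Finset.sum_nonneg fun j _ ↦ ?_
  rcases eq_or_ne i j with rfl | hij
  · rw [sub_self, mul_zero]
  · exact mul_nonneg (hQ.1 i j hij) (sub_nonneg.2 (hi j))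

lemma norm_mulVec_le {q : ℝ} (hq : ∀ i, -Q i i ≤ q) (v : Fin N → ℝ) :
    ‖Q *ᵥ v‖ ≤ 2 * q * ‖v‖ := by
  rcases isEmpty_or_nonempty (Fin N) with _ | ⟨⟨i₀⟩⟩
  · simp [Subsingleton.elim v 0]
  have hq0 : 0 ≤ q := (hQ.neg_diag_nonneg i₀).trans (hq i₀)
  refine (pi_norm_le_iff_of_nonneg (by positivity)).2 fun i ↦ ?_
  have hdiff (j : Fin N) : ‖v j - v i‖ ≤ 2 * ‖v‖ :=
    (norm_sub_le _ _).trans (by linarith [norm_le_pi_norm v i, norm_le_pi_norm v j])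
  calc ‖(Q *ᵥ v) i‖ = ‖∑ j ∈ Finset.univ.erase i, Q i j * (v j - v i)‖ := by
        rw [hQ.mulVec_apply_eq_sum_mul_sub, Finset.sum_erase _ (by rw [sub_self, mul_zero])]
    _ ≤ ∑ j ∈ Finset.univ.erase i, Q i j * (2 * ‖v‖) := by
        refine norm_sum_le_of_le _ fun j hj ↦ ?_
        have hij : 0 ≤ Q i j := hQ.1 i j (Finset.ne_of_mem_erase hj).symm
        rw [norm_mul, Real.norm_of_nonneg hij]
        exact mul_le_mul_of_nonneg_left (hdiff j) hij
    _ = -Q i i * (2 * ‖v‖) := by rw [← Finset.sum_mul, hQ.sum_erase_eq_neg_diag]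
    _ ≤ q * (2 * ‖v‖) := mul_le_mul_of_nonneg_right (hq i) (by positivity)
    _ = 2 * q * ‖v‖ := by ring

lemma exp_smul_mem_rowStochastic {t : ℝ} (ht : 0 ≤ t) :
    exp (t • Q) ∈ Matrix.rowStochastic ℝ (Fin N) := by
  refine Matrix.mem_rowStochastic.2 ⟨exp_apply_nonneg_of_offDiag_nonneg fun i j hij ↦
    mul_nonneg ht (hQ.1 i j hij), exp_mulVec_eq_self_of_mulVec_eq_zero ?_⟩
  rw [Matrix.smul_mulVec, hQ.mulVec_one, smul_zero]

lemma exp_smul_mulVec_apply_le {q : ℝ} (hq : ∀ i, -Q i i ≤ q) {t : ℝ} (ht : 0 ≤ t)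
    (v : Fin N → ℝ) (i : Fin N) :
    (exp (t • Q) *ᵥ v) i ≤ v i + t * (Q *ᵥ v) i + t ^ 2 * q * ‖Q *ᵥ v‖ := by
  have hcontr (s : ℝ) (hs : 0 ≤ s) := norm_mulVec_le_of_mem_rowStochastic
    (hQ.exp_smul_mem_rowStochastic hs)
  have hremainder : (exp (t • Q) *ᵥ v - v - t • (Q *ᵥ v)) i ≤ t ^ 2 * q * ‖Q *ᵥ v‖ :=
    calc (exp (t • Q) *ᵥ v - v - t • (Q *ᵥ v)) i
      _ ≤ ‖exp (t • Q) *ᵥ v - v - t • (Q *ᵥ v)‖ := apply_le_pi_norm _ i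
      _ ≤ t ^ 2 / 2 * ‖Q *ᵥ (Q *ᵥ v)‖ := norm_exp_smul_mulVec_sub_sub_le hcontr ht v
      _ ≤ t ^ 2 / 2 * (2 * q * ‖Q *ᵥ v‖) := by gcongr; exact hQ.norm_mulVec_le hq _
      _ = t ^ 2 * q * ‖Q *ᵥ v‖ := by ring
  simp only [Pi.sub_apply, Pi.smul_apply, smul_eq_mul] at hremainder
  linarith

section Eigenvector

variable {d v : Fin N → ℝ} {γ : ℝ} (hv : ∀ i, 0 < v i)
  (h : (Q + Matrix.diagonal d) *ᵥ v = γ • v)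
include hv h

lemma exists_diag_le_eigenvalue [Nonempty (Fin N)] : ∃ i, d i ≤ γ := by
  obtain ⟨i, hi⟩ := Finite.exists_min v
  have hmin : 0 ≤ (γ - d i) * v i := by
    rw [← mulVec_apply_of_add_diagonal_mulVec_eq_smul h]
    exact hQ.mulVec_apply_nonneg_of_forall_le hi
  exact ⟨i, sub_nonneg.1 (nonneg_of_mul_nonneg_left hmin (hv i))⟩

lemma norm_mulVec_eigenvector_le (hγ : γ ≤ 0) {D : ℝ} (hd : ∀ i, |d i| ≤ D) :
    ‖Q *ᵥ v‖ ≤ 2 * D * ‖v‖ := by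
  rcases isEmpty_or_nonempty (Fin N) with _ | _
  · simp [Subsingleton.elim v 0]
  obtain ⟨k, hk⟩ := hQ.exists_diag_le_eigenvalue hv h
  have hD : 0 ≤ D := (abs_nonneg _).trans (hd k)
  refine (pi_norm_le_iff_of_nonneg (by positivity)).2 fun i ↦ ?_
  have hrate : |γ - d i| ≤ 2 * D := by
    have hik := And.intro (abs_le.1 (hd i)) (abs_le.1 (hd k))
    exact abs_le.2 ⟨by linarith, by linarith⟩
  rw [mulVec_apply_of_add_diagonal_mulVec_eq_smul h, norm_mul]
  exact mul_le_mul hrate (norm_le_pi_norm v i) (norm_nonneg _) (by positivity)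

lemma exp_smul_mulVec_eigenvector_le (hγ : γ ≤ 0) {D q : ℝ} (hd : ∀ i, |d i| ≤ D)
    (hq : ∀ i, -Q i i ≤ q) {t : ℝ} (ht : 0 ≤ t) {c : ℝ} {i : Fin N} (hc : 1 ≤ c * v i) :
    (exp (t • Q) *ᵥ v) i ≤ Real.exp (t * (γ - d i) + 2 * t ^ 2 * D * q * ‖v‖ * c) * v i := by
  have hD : 0 ≤ D := (abs_nonneg _).trans (hd i)
  have hq0 : 0 ≤ q := (hQ.neg_diag_nonneg i).trans (hq i)
  calc (exp (t • Q) *ᵥ v) i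
    _ ≤ v i + t * (Q *ᵥ v) i + t ^ 2 * q * ‖Q *ᵥ v‖ := hQ.exp_smul_mulVec_apply_le hq ht v i
    _ ≤ v i + t * ((γ - d i) * v i) + t ^ 2 * q * (2 * D * ‖v‖) := by
        rw [mulVec_apply_of_add_diagonal_mulVec_eq_smul h]
        gcongr
        exact hQ.norm_mulVec_eigenvector_le hv h hγ hd
    _ ≤ v i + t * ((γ - d i) * v i) + t ^ 2 * q * (2 * D * ‖v‖) * (c * v i) :=
        add_le_add_right (le_mul_of_one_le_right (by positivity) hc) _
    _ = (t * (γ - d i) + 2 * t ^ 2 * D * q * ‖v‖ * c + 1) * v i := by ring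
    _ ≤ _ := mul_le_mul_of_nonneg_right (Real.add_one_le_exp _) (hv i).le

end Eigenvector

end IsConservativeQMatrix

end ConservativeQMatrix

section Moments

open scoped Matrix ENNReal

lemma lintegral_enorm_rpow_le_lintegral_enorm_rpow_rpow_div {Ω E : Type*} [MeasurableSpace Ω]
    [NormedAddCommGroup E] {P : Measure Ω} [IsProbabilityMeasure P] {f : Ω → E}
    (hf : AEStronglyMeasurable f P) {p q : ℝ} (hp : 0 < p) (hpq : p ≤ q) :
    ∫⁻ ω, ‖f ω‖ₑ ^ p ∂P ≤ (∫⁻ ω, ‖f ω‖ₑ ^ q ∂P) ^ (p / q) := by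
  have h := ENNReal.rpow_le_rpow (eLpNorm'_le_eLpNorm'_of_exponent_le hp hpq P hf) hp.le
  rwa [eLpNorm', eLpNorm', ← ENNReal.rpow_mul, ← ENNReal.rpow_mul, one_div_mul_cancel hp.ne',
    ENNReal.rpow_one, one_div_mul_eq_div] at h

lemma hsNorm_nonneg {n m : ℕ} (M : Matrix (Fin n) (Fin m) ℝ) : 0 ≤ hsNorm M :=
  Real.sqrt_nonneg _

lemma hsNorm_sq {n m : ℕ} (M : Matrix (Fin n) (Fin m) ℝ) :
    hsNorm M ^ 2 = ∑ i, ∑ j, M i j ^ 2 :=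
  Real.sq_sqrt (Finset.sum_nonneg fun _ _ ↦ Finset.sum_nonneg fun _ _ ↦ sq_nonneg _)

lemma hsNorm_smul_sq {n m : ℕ} (c : ℝ) (M : Matrix (Fin n) (Fin m) ℝ) :
    hsNorm (c • M) ^ 2 = c ^ 2 * hsNorm M ^ 2 := by
  simp only [hsNorm_sq, Matrix.smul_apply, smul_eq_mul, mul_pow, Finset.mul_sum]

instance isProbabilityMeasure_stdGaussianPi (m : ℕ) : IsProbabilityMeasure (stdGaussianPi m) := by
  unfold stdGaussianPi
  infer_instance

lemma memLp_dotProduct_stdGaussianPi {m : ℕ} (s : Fin m → ℝ) :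
    MemLp (fun z ↦ s ⬝ᵥ z) 2 (stdGaussianPi m) :=
  memLp_finsetSum _ fun j _ ↦ ((memLp_id_gaussianReal 2).comp_measurePreserving
    (measurePreserving_eval (fun _ : Fin m ↦ gaussianReal 0 1) j)).const_mul (s j)

lemma integral_dotProduct_stdGaussianPi {m : ℕ} (s : Fin m → ℝ) :
    ∫ z, s ⬝ᵥ z ∂stdGaussianPi m = 0 := by
  have hmean (j : Fin m) : ∫ z, z j ∂stdGaussianPi m = 0 :=
    (integral_comp_eval (μ := fun _ : Fin m ↦ gaussianReal 0 1) (f := fun x ↦ x)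
      aestronglyMeasurable_id).trans integral_id_gaussianReal
  have hint (j : Fin m) : Integrable (fun z ↦ s j * z j) (stdGaussianPi m) :=
    (integrable_comp_eval (μ := fun _ : Fin m ↦ gaussianReal 0 1) (f := fun x ↦ x)
      ((memLp_id_gaussianReal 1).integrable le_rfl)).const_mul (s j)
  simp only [dotProduct, integral_finsetSum _ fun j _ ↦ hint j, integral_const_mul, hmean,
    mul_zero, Finset.sum_const_zero]

lemma variance_dotProduct_stdGaussianPi {m : ℕ} (s : Fin m → ℝ) :
    Var[fun z ↦ s ⬝ᵥ z; stdGaussianPi m] = ∑ j, s j ^ 2 := by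
  have hsum : (fun z ↦ s ⬝ᵥ z) = ∑ j, fun z : Fin m → ℝ ↦ s j * z j := by
    ext z
    simp only [dotProduct, Finset.sum_apply]
  have hvar (j : Fin m) : Var[fun x ↦ s j * x; gaussianReal 0 1] = s j ^ 2 := by
    rw [variance_const_mul, variance_fun_id_gaussianReal, NNReal.coe_one, mul_one]
  rw [hsum, stdGaussianPi, variance_sum_pi (X := fun j x ↦ s j * x)
    fun j ↦ (memLp_id_gaussianReal 2).const_mul (s j)]
  exact Finset.sum_congr rfl fun j _ ↦ hvar j

lemma integral_add_dotProduct_sq_stdGaussianPi {m : ℕ} (a : ℝ) (s : Fin m → ℝ) :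
    ∫ z, (a + s ⬝ᵥ z) ^ 2 ∂stdGaussianPi m = a ^ 2 + ∑ j, s j ^ 2 := by
  have hs := memLp_dotProduct_stdGaussianPi s
  have hmean : ∫ z, a + s ⬝ᵥ z ∂stdGaussianPi m = a := by
    rw [integral_add (integrable_const a) (hs.integrable one_le_two),
      integral_dotProduct_stdGaussianPi, add_zero, integral_const, probReal_univ, one_smul]
  have hvar := variance_eq_sub ((memLp_const a).add hs)
  change Var[fun z ↦ a + s ⬝ᵥ z; stdGaussianPi m] =
    ∫ z, (a + s ⬝ᵥ z) ^ 2 ∂stdGaussianPi m - (∫ z, a + s ⬝ᵥ z ∂stdGaussianPi m) ^ 2 at hvar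
  rw [variance_const_add hs.aestronglyMeasurable, variance_dotProduct_stdGaussianPi,
    hmean] at hvar
  linarith

lemma lintegral_enorm_add_mulVec_sq_stdGaussianPi {n m : ℕ} (x : EuclideanSpace ℝ (Fin n))
    (M : Matrix (Fin n) (Fin m) ℝ) :
    ∫⁻ z, ‖x + WithLp.toLp 2 (M *ᵥ z)‖ₑ ^ (2 : ℝ) ∂stdGaussianPi m =
      ENNReal.ofReal (‖x‖ ^ 2 + hsNorm M ^ 2) := by
  have hint (i : Fin n) : Integrable (fun z ↦ (x i + M i ⬝ᵥ z) ^ 2) (stdGaussianPi m) :=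
    ((memLp_const (x i)).add (memLp_dotProduct_stdGaussianPi (M i))).integrable_sq
  have hnorm (z : Fin m → ℝ) : ‖x + WithLp.toLp 2 (M *ᵥ z)‖ₑ ^ (2 : ℝ) =
      ENNReal.ofReal (∑ i, (x i + M i ⬝ᵥ z) ^ 2) := by
    rw [ENNReal.rpow_two, ← ofReal_norm, ← ENNReal.ofReal_pow (norm_nonneg _),
      EuclideanSpace.real_norm_sq_eq]
    rfl
  simp only [hnorm]
  rw [← ofReal_integral_eq_lintegral_ofReal (integrable_finsetSum _ fun i _ ↦ hint i)
      (ae_of_all _ fun z ↦ Finset.sum_nonneg fun i _ ↦ sq_nonneg _),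
    integral_finsetSum _ fun i _ ↦ hint i, EuclideanSpace.real_norm_sq_eq, hsNorm_sq,
    ← Finset.sum_add_distrib]
  simp only [integral_add_dotProduct_sq_stdGaussianPi]

lemma lintegral_enorm_add_mulVec_rpow_stdGaussianPi_le {n m : ℕ} (x : EuclideanSpace ℝ (Fin n))
    (M : Matrix (Fin n) (Fin m) ℝ) {p : ℝ} (hp : 0 < p) (hp2 : p ≤ 2) :
    ∫⁻ z, ‖x + WithLp.toLp 2 (M *ᵥ z)‖ₑ ^ p ∂stdGaussianPi m ≤
      ENNReal.ofReal ((‖x‖ ^ 2 + hsNorm M ^ 2) ^ (p / 2)) := by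
  have hmeas : Measurable fun z : Fin m → ℝ ↦ x + WithLp.toLp 2 (M *ᵥ z) := by fun_prop
  rw [← ENNReal.ofReal_rpow_of_nonneg (by positivity) (by positivity),
    ← lintegral_enorm_add_mulVec_sq_stdGaussianPi]
  exact lintegral_enorm_rpow_le_lintegral_enorm_rpow_rpow_div hmeas.aestronglyMeasurable hp hp2

end Moments

section EMKernel

open scoped Matrix

lemma lintegral_rowMeasure {N : ℕ} {P : Matrix (Fin N) (Fin N) ℝ} (hP : ∀ i j, 0 ≤ P i j)
    {v : Fin N → ℝ} (hv : ∀ j, 0 ≤ v j) (i : Fin N) :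
    ∫⁻ j, ENNReal.ofReal (v j) ∂rowMeasure P i = ENNReal.ofReal ((P *ᵥ v) i) := by
  simp only [rowMeasure, lintegral_finsetSum_measure, lintegral_smul_measure, lintegral_dirac,
    smul_eq_mul]
  rw [Matrix.mulVec, dotProduct, ENNReal.ofReal_sum_of_nonneg fun j _ ↦ mul_nonneg (hP i j) (hv j)]
  simp only [ENNReal.ofReal_mul (hP i _)]

lemma isProbabilityMeasure_rowMeasure {N : ℕ} {P : Matrix (Fin N) (Fin N) ℝ}
    (hP : P ∈ Matrix.rowStochastic ℝ (Fin N)) (i : Fin N) :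
    IsProbabilityMeasure (rowMeasure P i) := by
  have hone := lintegral_rowMeasure (P := P) (v := 1)
    (fun _ _ ↦ Matrix.nonneg_of_mem_rowStochastic hP) (fun _ ↦ zero_le_one) i
  rw [Matrix.one_vecMul_of_mem_rowStochastic hP] at hone
  exact ⟨by simpa using hone⟩

variable {n m N : ℕ} {Q : Matrix (Fin N) (Fin N) ℝ}
  {b : EuclideanSpace ℝ (Fin n) → Fin N → EuclideanSpace ℝ (Fin n)}
  {σ : EuclideanSpace ℝ (Fin n) → Fin N → Matrix (Fin n) (Fin m) ℝ} {δ : ℝ}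

lemma measurable_EMKernel_step (q : EuclideanSpace ℝ (Fin n) × Fin N) :
    Measurable fun zj : (Fin m → ℝ) × Fin N ↦ (q.1 + δ • b q.1 q.2 +
      √δ • ((WithLp.equiv 2 (Fin n → ℝ)).symm (σ q.1 q.2 *ᵥ zj.1)), zj.2) := by
  simp only [WithLp.equiv_symm_apply]
  fun_prop

lemma isProbabilityMeasure_EMKernel (hQ : IsConservativeQMatrix Q) (hδ : 0 ≤ δ)
    (q : EuclideanSpace ℝ (Fin n) × Fin N) : IsProbabilityMeasure (EMKernel Q b σ δ q) := by
  have := isProbabilityMeasure_rowMeasure (hQ.exp_smul_mem_rowStochastic hδ) q.2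
  rw [← matExp_eq_exp] at this
  exact Measure.isProbabilityMeasure_map (measurable_EMKernel_step q).aemeasurable

lemma lintegral_EMKernel_mul (hQ : IsConservativeQMatrix Q) (hδ : 0 ≤ δ)
    {f : EuclideanSpace ℝ (Fin n) → ENNReal} (hf : Measurable f) {v : Fin N → ℝ}
    (hv : ∀ j, 0 ≤ v j) (q : EuclideanSpace ℝ (Fin n) × Fin N) :
    ∫⁻ r, f r.1 * ENNReal.ofReal (v r.2) ∂EMKernel Q b σ δ q =
      (∫⁻ z, f (q.1 + δ • b q.1 q.2 + WithLp.toLp 2 ((√δ • σ q.1 q.2) *ᵥ z)) ∂stdGaussianPi m) *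
        ENNReal.ofReal ((NormedSpace.exp (δ • Q) *ᵥ v) q.2) := by
  have hP : ∀ i j, 0 ≤ NormedSpace.exp (δ • Q) i j := fun _ _ ↦
    Matrix.nonneg_of_mem_rowStochastic (hQ.exp_smul_mem_rowStochastic hδ)
  have := isProbabilityMeasure_rowMeasure (hQ.exp_smul_mem_rowStochastic hδ) q.2
  rw [EMKernel, lintegral_map (by fun_prop) (measurable_EMKernel_step q), matExp_eq_exp,
    ← lintegral_rowMeasure hP hv]
  simp only [WithLp.equiv_symm_apply, Matrix.smul_mulVec, WithLp.toLp_smul]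
  exact lintegral_prod_mul (f := fun z ↦ f (q.1 + δ • b q.1 q.2 +
    √δ • WithLp.toLp 2 (σ q.1 q.2 *ᵥ z))) (g := fun j ↦ ENNReal.ofReal (v j))
    (by fun_prop) (by fun_prop)

end EMKernel

section Lyapunov

open scoped ENNReal

variable {X : Type*} [MeasurableSpace X] {K : X → Measure X} [∀ x, IsProbabilityMeasure (K x)]

lemma iterate_bind_univ_le (k : ℕ) (ρ : Measure X) :
    ((fun ρ : Measure X ↦ ρ.bind K)^[k] ρ) Set.univ ≤ ρ Set.univ := by
  induction k generalizing ρ with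
  | zero => exact le_rfl
  | succ k ih =>
    refine (ih (ρ.bind K)).trans ?_
    simpa using Measure.lintegral_bind_le 1 ρ K

lemma lintegral_iterate_bind_le_of_drift {V : X → ℝ≥0∞} (hV : Measurable V) {r c B : ℝ≥0∞}
    (hdrift : ∀ x, ∫⁻ y, V y ∂K x ≤ r * V x + c) (hB : r * B + c ≤ B) {ρ : Measure X}
    [IsProbabilityMeasure ρ] (hρ : ∫⁻ x, V x ∂ρ ≤ B) (k : ℕ) :
    ∫⁻ x, V x ∂((fun ρ : Measure X ↦ ρ.bind K)^[k] ρ) ≤ B := by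
  induction k with
  | zero => exact hρ
  | succ k ih =>
    rw [Function.iterate_succ_apply']
    set ρ' := (fun ρ : Measure X ↦ ρ.bind K)^[k] ρ
    have hmass : ρ' Set.univ ≤ 1 := (iterate_bind_univ_le k ρ).trans_eq measure_univ
    calc ∫⁻ y, V y ∂ρ'.bind K
      _ ≤ ∫⁻ x, ∫⁻ y, V y ∂K x ∂ρ' := Measure.lintegral_bind_le V ρ' K
      _ ≤ ∫⁻ x, r * V x + c ∂ρ' := lintegral_mono hdrift
      _ = r * ∫⁻ x, V x ∂ρ' + c * ρ' Set.univ := by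
          rw [lintegral_add_right _ measurable_const, lintegral_const_mul _ hV, lintegral_const]
      _ ≤ r * B + c * 1 := by gcongr
      _ ≤ B := by rwa [mul_one]

lemma iSup_lintegral_iterate_bind_dirac_lt_top_of_drift {V W : X → ℝ≥0∞} (hV : Measurable V)
    {r c C : ℝ≥0∞} (hr : r < 1) (hc : c ≠ ∞) (hdrift : ∀ x, ∫⁻ y, V y ∂K x ≤ r * V x + c)
    (hC : C ≠ ∞) (hW : ∀ x, W x ≤ C * V x) {x : X} (hx : V x ≠ ∞) :
    ⨆ k, ∫⁻ y, W y ∂((fun ρ : Measure X ↦ ρ.bind K)^[k] (Measure.dirac x)) < ∞ := by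
  set B : ℝ≥0∞ := V x + c * (1 - r)⁻¹ with hBdef
  have hr0 : 1 - r ≠ 0 := (tsub_pos_of_lt hr).ne'
  have hfix : r * (c * (1 - r)⁻¹) + c = c * (1 - r)⁻¹ :=
    calc r * (c * (1 - r)⁻¹) + c = r * (c * (1 - r)⁻¹) + (1 - r) * (c * (1 - r)⁻¹) := by
          rw [mul_left_comm (1 - r), ENNReal.mul_inv_cancel hr0 (by finiteness), mul_one]
      _ = c * (1 - r)⁻¹ := by rw [← add_mul, add_tsub_cancel_of_le hr.le, one_mul]
  have hB : r * B + c ≤ B := by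
    rw [hBdef, mul_add, add_assoc, hfix]
    gcongr
    exact mul_le_of_le_one_left' hr.le
  have hstart : ∫⁻ y, V y ∂Measure.dirac x ≤ B := by
    rw [lintegral_dirac' x hV]
    exact le_self_add
  have hfinite : C * B < ∞ := by finiteness
  refine (iSup_le fun k ↦ ?_).trans_lt hfinite
  calc ∫⁻ y, W y ∂((fun ρ : Measure X ↦ ρ.bind K)^[k] (Measure.dirac x))
    _ ≤ ∫⁻ y, C * V y ∂((fun ρ : Measure X ↦ ρ.bind K)^[k] (Measure.dirac x)) :=
        lintegral_mono hW
    _ = C * ∫⁻ y, V y ∂((fun ρ : Measure X ↦ ρ.bind K)^[k] (Measure.dirac x)) :=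
        lintegral_const_mul C hV
    _ ≤ C * B := by
        gcongr
        exact lintegral_iterate_bind_le_of_drift hV hdrift hB hstart k

end Lyapunov

section Drift

open scoped Matrix ENNReal

lemma norm_add_smul_sq_add_le {E : Type*} [NormedAddCommGroup E] [InnerProductSpace ℝ E]
    {x u w : E} {s c β L δ : ℝ} (hdissip : 2 * inner ℝ x u + s ≤ c + β * ‖x‖ ^ 2)
    (hgrowth : ‖u - w‖ ≤ L * ‖x‖) (hδ : 0 ≤ δ) :
    ‖x + δ • u‖ ^ 2 + δ * s ≤
      (1 + δ * β + 2 * δ ^ 2 * L ^ 2) * ‖x‖ ^ 2 + (δ * c + 2 * δ ^ 2 * ‖w‖ ^ 2) := by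
  have hu : ‖u‖ ^ 2 ≤ 2 * (L ^ 2 * ‖x‖ ^ 2 + ‖w‖ ^ 2) :=
    calc ‖u‖ ^ 2 ≤ (L * ‖x‖ + ‖w‖) ^ 2 := by
          gcongr
          exact (norm_le_norm_sub_add u w).trans (by gcongr)
      _ ≤ 2 * ((L * ‖x‖) ^ 2 + ‖w‖ ^ 2) := add_sq_le
      _ = 2 * (L ^ 2 * ‖x‖ ^ 2 + ‖w‖ ^ 2) := by rw [mul_pow]
  calc ‖x + δ • u‖ ^ 2 + δ * s = ‖x‖ ^ 2 + δ * (2 * inner ℝ x u + s) + δ ^ 2 * ‖u‖ ^ 2 := by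
        rw [norm_add_sq_real, inner_smul_right, norm_smul, Real.norm_of_nonneg hδ]
        ring
    _ ≤ ‖x‖ ^ 2 + δ * (c + β * ‖x‖ ^ 2) + δ ^ 2 * (2 * (L ^ 2 * ‖x‖ ^ 2 + ‖w‖ ^ 2)) := by gcongr
    _ = _ := by ring

lemma rpow_half_le_exp_mul_rpow_add {A a y D p : ℝ} (hA : 0 ≤ A) (hy : 0 ≤ y) (hD : 0 ≤ D)
    (h : A ≤ (1 + a) * y ^ 2 + D) (hp : 0 ≤ p) (hp2 : p ≤ 2) :
    A ^ (p / 2) ≤ Real.exp (p / 2 * a) * y ^ p + D ^ (p / 2) := by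
  calc A ^ (p / 2) ≤ (Real.exp a * y ^ 2 + D) ^ (p / 2) := by
        gcongr
        refine h.trans ?_
        gcongr
        exact (add_comm 1 a).trans_le (Real.add_one_le_exp a)
    _ ≤ (Real.exp a * y ^ 2) ^ (p / 2) + D ^ (p / 2) :=
        Real.rpow_add_le_add_rpow (by positivity) hD (by positivity) (by linarith)
    _ = Real.exp (p / 2 * a) * y ^ p + D ^ (p / 2) := by
        rw [Real.mul_rpow (Real.exp_nonneg a) (by positivity), ← Real.exp_mul, ← Real.rpow_natCast,
          ← Real.rpow_mul hy, mul_comm a, Nat.cast_ofNat, mul_div_cancel₀ p two_ne_zero]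

/-- The Lyapunov function `(x, i) ↦ ξᵢ |x| ^ p` of the switching scheme. -/
noncomputable def switchingLyapunov {n N : ℕ} (p : ℝ) (ξ : Fin N → ℝ)
    (q : EuclideanSpace ℝ (Fin n) × Fin N) : ℝ≥0∞ :=
  ‖q.1‖ₑ ^ p * ENNReal.ofReal (ξ q.2)

lemma measurable_switchingLyapunov {n N : ℕ} (p : ℝ) (ξ : Fin N → ℝ) :
    Measurable (switchingLyapunov (n := n) p ξ) := by
  unfold switchingLyapunov
  fun_prop

lemma switchingLyapunov_ne_top {n N : ℕ} {p : ℝ} (hp : 0 ≤ p) (ξ : Fin N → ℝ)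
    (q : EuclideanSpace ℝ (Fin n) × Fin N) : switchingLyapunov p ξ q ≠ ∞ :=
  ENNReal.mul_ne_top (ENNReal.rpow_ne_top_of_nonneg hp enorm_ne_top) ENNReal.ofReal_ne_top

lemma ofReal_norm_rpow_le_mul_switchingLyapunov {n N : ℕ} {p : ℝ} (hp : 0 ≤ p) {ξ : Fin N → ℝ}
    {c : ℝ} (hc : 0 ≤ c) {q : EuclideanSpace ℝ (Fin n) × Fin N} (hξ : 1 ≤ c * ξ q.2) :
    ENNReal.ofReal (‖q.1‖ ^ p) ≤ ENNReal.ofReal c * switchingLyapunov p ξ q := by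
  rw [switchingLyapunov, mul_left_comm, ← ENNReal.ofReal_mul hc,
    ← ENNReal.ofReal_rpow_of_nonneg (norm_nonneg _) hp, ofReal_norm]
  exact le_mul_of_one_le_right' (ENNReal.one_le_ofReal.2 hξ)

variable {n m N : ℕ} {Q : Matrix (Fin N) (Fin N) ℝ}
  {b : EuclideanSpace ℝ (Fin n) → Fin N → EuclideanSpace ℝ (Fin n)}
  {σ : EuclideanSpace ℝ (Fin n) → Fin N → Matrix (Fin n) (Fin m) ℝ}

lemma lintegral_enorm_rpow_EM_step_le {x u w : EuclideanSpace ℝ (Fin n)}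
    {M : Matrix (Fin n) (Fin m) ℝ} {c β L δ p : ℝ}
    (hdissip : 2 * inner ℝ x u + hsNorm M ^ 2 ≤ c + β * ‖x‖ ^ 2)
    (hgrowth : ‖u - w‖ ≤ L * ‖x‖) (hc : 0 ≤ c) (hδ : 0 ≤ δ) (hp : 0 < p) (hp2 : p ≤ 2) :
    ∫⁻ z, ‖x + δ • u + WithLp.toLp 2 ((√δ • M) *ᵥ z)‖ₑ ^ p ∂stdGaussianPi m ≤
      ENNReal.ofReal (Real.exp (p / 2 * (δ * β + 2 * δ ^ 2 * L ^ 2)) * ‖x‖ ^ p +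
        (δ * c + 2 * δ ^ 2 * ‖w‖ ^ 2) ^ (p / 2)) := by
  have hsecond := norm_add_smul_sq_add_le hdissip hgrowth hδ
  rw [add_assoc 1] at hsecond
  refine (lintegral_enorm_add_mulVec_rpow_stdGaussianPi_le _ _ hp hp2).trans
    (ENNReal.ofReal_le_ofReal ?_)
  rw [hsNorm_smul_sq, Real.sq_sqrt hδ]
  exact rpow_half_le_exp_mul_rpow_add (by positivity) (norm_nonneg x) (by positivity) hsecond
    hp.le hp2

lemma exp_mul_exp_smul_mulVec_eigenvector_le (hQ : IsConservativeQMatrix Q) {β : Fin N → ℝ}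
    {p η : ℝ} (hp : 0 ≤ p) (hη : 0 ≤ η) {ξ : Fin N → ℝ} (hξ : ∀ i, 0 < ξ i)
    (hξeig : (Q + (p / 2) • Matrix.diagonal β) *ᵥ ξ = -η • ξ) {ξbar : ℝ} {i : Fin N}
    (hξbar : 1 ≤ ξbar * ξ i) {β₀ q₀ : ℝ} (hβ₀ : ∀ i, |β i| ≤ β₀) (hq₀ : ∀ i, -Q i i ≤ q₀)
    {L δ : ℝ} (hδ : 0 ≤ δ) :
    Real.exp (p / 2 * (δ * β i + 2 * δ ^ 2 * L ^ 2)) * (NormedSpace.exp (δ • Q) *ᵥ ξ) i ≤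
      Real.exp (δ * (δ * (p * (L ^ 2 + β₀ * q₀ * ‖ξ‖ * ξbar)) - η)) * ξ i := by
  have hp' : 0 ≤ p / 2 := by positivity
  have hd (j : Fin N) : |((p / 2) • β) j| ≤ p / 2 * β₀ := by
    rw [Pi.smul_apply, smul_eq_mul, abs_mul, abs_of_nonneg hp']
    exact mul_le_mul_of_nonneg_left (hβ₀ j) hp'
  rw [← Matrix.diagonal_smul] at hξeig
  refine (mul_le_mul_of_nonneg_left (hQ.exp_smul_mulVec_eigenvector_le hξ hξeig
    (neg_nonpos.2 hη) hd hq₀ hδ hξbar) (Real.exp_nonneg _)).trans_eq ?_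
  rw [← mul_assoc, ← Real.exp_add, Pi.smul_apply, smul_eq_mul]
  ring_nf

lemma lintegral_switchingLyapunov_EMKernel_le (hQ : IsConservativeQMatrix Q) {L : ℝ}
    (hgrowth : ∀ i x, ‖b x i - b 0 i‖ ≤ L * ‖x‖) {c₀ : ℝ} {β : Fin N → ℝ}
    (hH : ∀ i x, 2 * inner ℝ x (b x i) + hsNorm (σ x i) ^ 2 ≤ c₀ + β i * ‖x‖ ^ 2)
    {p η : ℝ} (hp : 0 < p) (hp2 : p ≤ 2) (hη : 0 ≤ η) {ξ : Fin N → ℝ} (hξ : ∀ i, 0 < ξ i)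
    (hξeig : (Q + (p / 2) • Matrix.diagonal β) *ᵥ ξ = -η • ξ) {ξbar β₀ q₀ : ℝ}
    (hξbar : ∀ i, 1 ≤ ξbar * ξ i) (hβ₀ : ∀ i, |β i| ≤ β₀) (hq₀ : ∀ i, -Q i i ≤ q₀)
    {δ : ℝ} (hδ : 0 ≤ δ) (q : EuclideanSpace ℝ (Fin n) × Fin N) :
    ∫⁻ r, switchingLyapunov p ξ r ∂EMKernel Q b σ δ q ≤
      ENNReal.ofReal (Real.exp (δ * (δ * (p * (L ^ 2 + β₀ * q₀ * ‖ξ‖ * ξbar)) - η))) *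
          switchingLyapunov p ξ q +
        ENNReal.ofReal ((δ * c₀ + 2 * δ ^ 2 * ‖b 0‖ ^ 2) ^ (p / 2) * ‖ξ‖) := by
  obtain ⟨x, i⟩ := q
  have hc₀ : 0 ≤ c₀ := by
    have h := hH i 0
    rw [inner_zero_left, norm_zero] at h
    linarith [sq_nonneg (hsNorm (σ 0 i))]
  set a : ℝ := Real.exp (p / 2 * (δ * β i + 2 * δ ^ 2 * L ^ 2))
  set D : ℝ := (δ * c₀ + 2 * δ ^ 2 * ‖b 0‖ ^ 2) ^ (p / 2) with hD
  set e : ℝ := (NormedSpace.exp (δ • Q) *ᵥ ξ) i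
  set r : ℝ := Real.exp (δ * (δ * (p * (L ^ 2 + β₀ * q₀ * ‖ξ‖ * ξbar)) - η))
  have hmoment : ∫⁻ z, ‖x + δ • b x i + WithLp.toLp 2 ((√δ • σ x i) *ᵥ z)‖ₑ ^ p
      ∂stdGaussianPi m ≤ ENNReal.ofReal (a * ‖x‖ ^ p + D) := by
    refine (lintegral_enorm_rpow_EM_step_le (hH i x) (hgrowth i x) hc₀ hδ hp hp2).trans ?_
    rw [hD]
    gcongr
    exact norm_le_pi_norm (b 0) i
  have he : e ≤ ‖ξ‖ := (apply_le_pi_norm _ i).trans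
    (norm_mulVec_le_of_mem_rowStochastic (hQ.exp_smul_mem_rowStochastic hδ) ξ)
  have hrate : a * e ≤ r * ξ i :=
    exp_mul_exp_smul_mulVec_eigenvector_le hQ hp.le hη hξ hξeig (hξbar i) hβ₀ hq₀ hδ
  calc ∫⁻ r, switchingLyapunov p ξ r ∂EMKernel Q b σ δ (x, i)
    _ ≤ ENNReal.ofReal (a * ‖x‖ ^ p + D) * ENNReal.ofReal e := by
        refine (lintegral_EMKernel_mul hQ hδ
          (measurable_enorm.pow_const p) (fun j ↦ (hξ j).le) (x, i)).trans_le ?_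
        gcongr
    _ = ENNReal.ofReal (a * e * ‖x‖ ^ p + D * e) := by
        rw [← ENNReal.ofReal_mul (by positivity)]
        ring_nf
    _ ≤ ENNReal.ofReal (r * ξ i * ‖x‖ ^ p + D * ‖ξ‖) := by gcongr
    _ ≤ ENNReal.ofReal (r * ξ i * ‖x‖ ^ p) + ENNReal.ofReal (D * ‖ξ‖) := ENNReal.ofReal_add_le
    _ = _ := by
        rw [switchingLyapunov, ENNReal.ofReal_mul (mul_nonneg (Real.exp_nonneg _) (hξ i).le),
          ENNReal.ofReal_mul (Real.exp_nonneg _), ← ENNReal.ofReal_rpow_of_nonneg (norm_nonneg x)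
          hp.le, ofReal_norm, mul_assoc, mul_comm (ENNReal.ofReal (ξ i))]

end Drift

lemma mul_lt_of_lt_div_rpow {α δ η p : ℝ} (hα : 0 ≤ α) (hη : 0 ≤ η) (hδ0 : 0 < δ) (hδ1 : δ ≤ 1)
    (hp : 0 < p) (hp2 : p ≤ 2) (hδ : δ < (η / α) ^ (2 / p)) : δ * α < η := by
  have hpow : δ ^ (p / 2) < η / α := by
    have h := Real.rpow_lt_rpow hδ0.le hδ (half_pos hp)
    rwa [← Real.rpow_mul (div_nonneg hη hα), div_mul_div_cancel₀ hp.ne', div_self two_ne_zero,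
      Real.rpow_one] at h
  have hδη : δ < η / α :=
    (Real.self_le_rpow_of_le_one hδ0.le hδ1 (by linarith)).trans_lt hpow
  have hα0 : α ≠ 0 := by
    rintro rfl
    exact (hδ0.trans hδη).ne' (div_zero η)
  exact (lt_div_iff₀ (hα.lt_of_ne' hα0)).1 hδη

lemma stepsize_mul_driftRate_lt {N : ℕ} {Q : Matrix (Fin N) (Fin N) ℝ}
    (hQ : IsConservativeQMatrix Q) {β ξ : Fin N → ℝ} (hξpos : ∀ i, 0 < ξ i)
    {L p ηp ξhat ξbar β₀ q₀ α δ : ℝ} (hL : 0 ≤ L) (hp : 0 < p) (hp2 : p ≤ 2) (hη : 0 ≤ ηp)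
    (hξhat : IsGreatest (Set.range ξ) ξhat) (hξbar : IsLeast (Set.range ξ) ξbar⁻¹)
    (hβ₀ : IsGreatest (Set.range fun i ↦ |β i|) β₀)
    (hq₀ : IsGreatest (Set.range fun i ↦ -Q i i) q₀)
    (hα : α = p * (β₀ + 4 * L ^ 2 * (3 + 4 * β₀)
      + (4 : ℝ) ^ ((2 + p) / 2) * β₀ * ((4 : ℝ) ^ (p / 2) * L ^ p + q₀ * ξhat * ξbar)))
    (hδ0 : 0 < δ) (hδ1 : δ ≤ 1) (hδ : δ < (ηp / α) ^ (2 / p)) :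
    δ * (p * (L ^ 2 + β₀ * q₀ * ξhat * ξbar)) < ηp := by
  have hξhat0 : 0 ≤ ξhat := by
    obtain ⟨j, rfl⟩ := hξhat.1
    exact (hξpos j).le
  have hξbar0 : 0 ≤ ξbar := by
    obtain ⟨j, hj⟩ := hξbar.1
    exact inv_nonneg.1 (hj ▸ (hξpos j).le)
  have hβ₀0 : 0 ≤ β₀ := by
    obtain ⟨j, rfl⟩ := hβ₀.1
    exact abs_nonneg (β j)
  have hq₀0 : 0 ≤ q₀ := by
    obtain ⟨j, rfl⟩ := hq₀.1
    exact hQ.neg_diag_nonneg j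
  have hpow : 1 ≤ (4 : ℝ) ^ ((2 + p) / 2) := Real.one_le_rpow (by norm_num) (by positivity)
  have hrate : p * (L ^ 2 + β₀ * q₀ * ξhat * ξbar) ≤ α := by
    rw [hα]
    refine mul_le_mul_of_nonneg_left ?_ hp.le
    calc L ^ 2 + β₀ * q₀ * ξhat * ξbar
      _ ≤ 4 * L ^ 2 * (3 + 4 * β₀) + 1 * β₀ * (0 + q₀ * ξhat * ξbar) := by
          nlinarith [mul_nonneg (sq_nonneg L) hβ₀0, sq_nonneg L]
      _ ≤ 4 * L ^ 2 * (3 + 4 * β₀) + (4 : ℝ) ^ ((2 + p) / 2) * β₀ *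
          ((4 : ℝ) ^ (p / 2) * L ^ p + q₀ * ξhat * ξbar) := by
          gcongr
          positivity
      _ ≤ _ := by
          gcongr
          exact le_add_of_nonneg_left hβ₀0
  have hα0 : 0 ≤ α := le_trans (by positivity) hrate
  exact (mul_le_mul_of_nonneg_left hrate hδ0.le).trans_lt
    (mul_lt_of_lt_div_rpow hα0 hη hδ0 hδ1 hp hp2 hδ)

theorem stmt6_general {n m N : ℕ}
    (Q : Matrix (Fin N) (Fin N) ℝ) (hQ : IsConservativeQMatrix Q)
    (b : EuclideanSpace ℝ (Fin n) → Fin N → EuclideanSpace ℝ (Fin n))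
    (σ : EuclideanSpace ℝ (Fin n) → Fin N → Matrix (Fin n) (Fin m) ℝ) (L : ℝ)
    (hLip : ∀ i x y, ‖b x i - b y i‖ + hsNorm (σ x i - σ y i) ≤ L * ‖x - y‖)
    (c₀ : ℝ) (β : Fin N → ℝ)
    (hH : ∀ i x, 2 * (inner ℝ x (b x i) : ℝ) + hsNorm (σ x i) ^ 2 ≤ c₀ + β i * ‖x‖ ^ 2)
    (p : ℝ) (hp : 0 < p) (hp2 : p ≤ 2) (ηp : ℝ) (hηpos : 0 < ηp)
    (ξ : Fin N → ℝ) (hξpos : ∀ i, 0 < ξ i)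
    (hξeig : (Q + (p / 2) • Matrix.diagonal β).mulVec ξ = (-ηp) • ξ)
    (ξhat ξbar β₀ q₀ : ℝ)
    (hξhat : IsGreatest (Set.range ξ) ξhat)
    (hξbar : IsLeast (Set.range ξ) ξbar⁻¹)
    (hβ₀ : IsGreatest (Set.range fun i => |β i|) β₀)
    (hq₀ : IsGreatest (Set.range fun i => -Q i i) q₀)
    (δ : ℝ) (hδ0 : 0 < δ) (hδ : δ * (p * (L ^ 2 + β₀ * q₀ * ξhat * ξbar)) < ηp)
    (x : EuclideanSpace ℝ (Fin n)) (i : Fin N) :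
    ⨆ k : ℕ, ∫⁻ q, ENNReal.ofReal (‖q.1‖ ^ p)
        ∂((fun ρ : Measure (EuclideanSpace ℝ (Fin n) × Fin N) =>
            ρ.bind (EMKernel Q b σ δ))^[k] (Measure.dirac (x, i))) < ⊤ := by
  have hgrowth (j : Fin N) (y : EuclideanSpace ℝ (Fin n)) : ‖b y j - b 0 j‖ ≤ L * ‖y‖ := by
    have h := hLip j y 0
    rw [sub_zero] at h
    linarith [hsNorm_nonneg (σ y j - σ 0 j)]
  have hξbar_pos : 0 < ξbar := by
    obtain ⟨j, hj⟩ := hξbar.1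
    exact inv_pos.1 (hj ▸ hξpos j)
  have hξbar_le (j : Fin N) : 1 ≤ ξbar * ξ j :=
    (inv_le_iff_one_le_mul₀' hξbar_pos).1 (hξbar.2 ⟨j, rfl⟩)
  rw [← pi_norm_eq_of_isGreatest_range (fun j ↦ (hξpos j).le) hξhat] at hδ
  have (q : EuclideanSpace ℝ (Fin n) × Fin N) : IsProbabilityMeasure (EMKernel Q b σ δ q) :=
    isProbabilityMeasure_EMKernel hQ hδ0.le q
  have hrate : ENNReal.ofReal
      (Real.exp (δ * (δ * (p * (L ^ 2 + β₀ * q₀ * ‖ξ‖ * ξbar)) - ηp))) < 1 :=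
    ENNReal.ofReal_lt_one.2 (Real.exp_lt_one_iff.2 (mul_neg_of_pos_of_neg hδ0 (sub_neg.2 hδ)))
  exact iSup_lintegral_iterate_bind_dirac_lt_top_of_drift (measurable_switchingLyapunov p ξ)
    hrate ENNReal.ofReal_ne_top
    (lintegral_switchingLyapunov_EMKernel_le hQ hgrowth hH hp hp2 hηpos.le hξpos hξeig hξbar_le
      (fun j ↦ hβ₀.2 ⟨j, rfl⟩) (fun j ↦ hq₀.2 ⟨j, rfl⟩) hδ0.le)
    ENNReal.ofReal_ne_top
    (fun q ↦ ofReal_norm_rpow_le_mul_switchingLyapunov hp.le hξbar_pos.le (hξbar_le q.2))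
    (switchingLyapunov_ne_top hp.le ξ (x, i))

theorem stmt6 {n m N : ℕ} (hN : 2 ≤ N)
    (Q : Matrix (Fin N) (Fin N) ℝ)
    (hQ : IsConservativeQMatrix Q) (hirr : MatrixIrreducible Q)
    (μ : Fin N → ℝ) (hμpos : ∀ i, 0 < μ i) (hμsum : ∑ i, μ i = 1)
    (hμstat : ∀ j, ∑ i, μ i * Q i j = 0)
    (b : EuclideanSpace ℝ (Fin n) → Fin N → EuclideanSpace ℝ (Fin n))
    (σ : EuclideanSpace ℝ (Fin n) → Fin N → Matrix (Fin n) (Fin m) ℝ)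
    -- additive noise : `σ` does not depend on the space variable
    (hadd : ∀ x y i, σ x i = σ y i)
    -- global Lipschitz condition
    (L : ℝ) (hL : 0 ≤ L)
    (hLip : ∀ i x y, ‖b x i - b y i‖ + hsNorm (σ x i - σ y i) ≤ L * ‖x - y‖)
    -- condition (H)
    (c₀ : ℝ) (hc₀ : 0 < c₀) (β : Fin N → ℝ)
    (hH1 : ∀ i x, 2 * (inner ℝ x (b x i) : ℝ) + hsNorm (σ x i) ^ 2 ≤ c₀ + β i * ‖x‖ ^ 2)
    (hH2 : ∀ i x y, 2 * (inner ℝ (x - y) (b x i - b y i) : ℝ)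
        + hsNorm (σ x i - σ y i) ^ 2 ≤ β i * ‖x - y‖ ^ 2)
    -- averaging condition
    (havg : ∑ i, μ i * β i < 0)
    -- `p`, `η_p` and the Perron–Frobenius eigenvector `ξ`
    (p : ℝ) (hp : 0 < p) (hp1 : p < 1) (ηp : ℝ)
    (hη : IsGreatest (spectrumRe (Q + (p / 2) • Matrix.diagonal β)) (-ηp))
    (hηpos : 0 < ηp)
    (ξ : Fin N → ℝ) (hξpos : ∀ i, 0 < ξ i)
    (hξeig : (Q + (p / 2) • Matrix.diagonal β).mulVec ξ = (-ηp) • ξ)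
    -- the constants of Theorem 3.1
    (ξhat ξbar β₀ q₀ α : ℝ)
    (hξhat : IsGreatest (Set.range ξ) ξhat)
    (hξbar : IsLeast (Set.range ξ) ξbar⁻¹)
    (hβ₀ : IsGreatest (Set.range fun i => |β i|) β₀)
    (hq₀ : IsGreatest (Set.range fun i => -Q i i) q₀)
    (hα : α = p * (β₀ + 4 * L ^ 2 * (3 + 4 * β₀)
        + (4 : ℝ) ^ ((2 + p) / 2) * β₀ * ((4 : ℝ) ^ (p / 2) * L ^ p + q₀ * ξhat * ξbar)))
    -- the stepsize
    (δ : ℝ) (hδ0 : 0 < δ) (hδ1 : δ < 1)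
    (hδ : δ < min (1 / (16 * L ^ 2)) ((ηp / α) ^ (2 / p))) :
    ∀ (x : EuclideanSpace ℝ (Fin n)) (i : Fin N),
      (⨆ k : ℕ, ∫⁻ q, ENNReal.ofReal (‖q.1‖ ^ p)
          ∂((fun ρ : Measure (EuclideanSpace ℝ (Fin n) × Fin N) =>
              ρ.bind (EMKernel Q b σ δ))^[k] (Measure.dirac (x, i)))) < ⊤ := by
  exact stmt6_general Q hQ b σ L hLip c₀ β hH1 p hp (by linarith) ηp hηpos ξ hξpos hξeig ξhat ξbar
    β₀ q₀ hξhat hξbar hβ₀ hq₀ δ hδ0 (stepsize_mul_driftRate_lt hQ hξpos hL hp (by linarith)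
      hηpos.le hξhat hξbar hβ₀ hq₀ hα hδ0 hδ1.le (lt_min_iff.1 hδ).2)
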